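/- Let V : ℝ → ℝ be Borel measurable, locally integrable and nonnegative almost everywhere, and let λ be a real number with λ > Σ_V. Then there exists a sequence (I_i)_{i∈ℕ} of nondegenerate compact intervals in ℝ with pairwise intersections contained in their frontiers (so that they form an infinite partition of ℝ in the sense of the paper), such that λ_V(I_i) = λ for every i ∈ ℕ. In particular, ℝ admits a (not necessarily exhaustive) infinite equipartition of energy λ all of whose clusters are compact. (This is the paper's Theorem 1.6 for the metric graph G = ℝ.) -/

import Mathlib

open MeasureTheory Set Filter Topology
open scoped ENNReal

/-- Rayleigh quotient of a test function `f` for the Schrödinger form with potential `V`. -/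
noncomputable def rayleigh (V : ℝ → ℝ) (f : ℝ → ℝ) : ℝ :=
  (∫ x, ((deriv f x) ^ 2 + V x * (f x) ^ 2)) / (∫ x, (f x) ^ 2)

/-- `f` is an admissible test function for the closed set `S`: continuously differentiable,
not identically zero, with compact support contained in `S`. -/
def TestFor (S : Set ℝ) (f : ℝ → ℝ) : Prop :=
  ContDiff ℝ 1 f ∧ f ≠ 0 ∧ HasCompactSupport f ∧ tsupport f ⊆ S

/-- Dirichlet ground state energy `λ_V(S)`, with `sInf ∅ = ∞`. -/
noncomputable def lambdaV (V : ℝ → ℝ) (S : Set ℝ) : ℝ≥0∞ :=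
  sInf {e : ℝ≥0∞ | ∃ f : ℝ → ℝ, TestFor S f ∧ e = ENNReal.ofReal (rayleigh V f)}

/-- `Σ_V`, the infimum of the essential spectrum of `-d²/dx² + V` on `ℝ`, characterized
Persson-style as `sup_{R>0} λ_V({|x| ≥ R})`. -/
noncomputable def SigmaV (V : ℝ → ℝ) : ℝ≥0∞ :=
  ⨆ R : ℝ, ⨆ _ : 0 < R, lambdaV V {x : ℝ | R ≤ |x|}

/-- A `k`-partition of `ℝ`: `k` closed connected subsets with nonempty interior whose
pairwise intersections are contained in both frontiers. -/
def IsPartitionR (k : ℕ) (G : Fin k → Set ℝ) : Prop :=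
  (∀ i, IsClosed (G i)) ∧ (∀ i, IsConnected (G i)) ∧
    (∀ i, (interior (G i)).Nonempty) ∧
    ∀ i j, i ≠ j → G i ∩ G j ⊆ frontier (G i) ∩ frontier (G j)

/-- The energy `Δ(P)` of a partition: the maximum of the ground state energies. -/
noncomputable def energyR (V : ℝ → ℝ) {k : ℕ} (G : Fin k → Set ℝ) : ℝ≥0∞ :=
  ⨆ i, lambdaV V (G i)

/-- The infimal `k`-partition energy `Δ*_k(ℝ)`. -/
noncomputable def optEnergyR (V : ℝ → ℝ) (k : ℕ) : ℝ≥0∞ :=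
  ⨅ G : {G : Fin k → Set ℝ // IsPartitionR k G}, energyR V G.1

open Function
open scoped NNReal

/-!
For fixed `a`, the energy `λ_V([a, t])` is nonincreasing in `t` and infinite at `t = a`. It is also
continuous in `t`. To pass from `[a, t]` to a shorter `[a, s]`, soft-threshold a test function `f`
at a level that bounds `|f|` on `[s, t]`: the form does not increase, and since `f t = 0`,
Cauchy–Schwarz gives `f² ≤ (t - s) * ∫ f'²` on `[s, t]`, so the loss of `L²` mass is small uniformly
in `f`. By the intermediate value theorem, every finite energy above `λ_V([a, b])` is attained on
some `[a, t]` with `t ≤ b`.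

If `Σ_V < λ`, there are test functions with Rayleigh quotient below `λ` outside every ball. Such a
function has compact support and splits into its restrictions to the two half-lines, one of which
has Rayleigh quotient below `λ`; this puts an interval of energy exactly `λ` outside every ball,
hence one disjoint from any finite number of intervals already chosen.
-/

section Support

variable {X E : Type*} [TopologicalSpace X]

theorem hasCompactSupport_pow [MonoidWithZero E] {f : X → E} (hc : HasCompactSupport f) {n : ℕ}
    (hn : n ≠ 0) : HasCompactSupport fun x => f x ^ n :=
  hc.comp_left (g := fun y : E => y ^ n) (zero_pow hn)

theorem support_subset_interior_of_tsupport_subset [TopologicalSpace E] [T1Space E] [Zero E]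
    {f : X → E} {S : Set X} (hf : Continuous f) (hS : tsupport f ⊆ S) :
    support f ⊆ interior S :=
  interior_maximal ((subset_tsupport f).trans hS) hf.isOpen_support

theorem tsupport_indicator_subset [Zero E] {S : Set X} (hS : IsClosed S) (f : X → E) :
    tsupport (S.indicator f) ⊆ S :=
  closure_minimal support_indicator_subset hS

theorem hasCompactSupport_indicator [Zero E] {f : X → E} (hc : HasCompactSupport f) (S : Set X) :
    HasCompactSupport (S.indicator f) :=
  hc.mono (support_indicator.trans_subset inter_subset_right)

theorem contDiff_indicator_of_tsupport_subset_union {𝕜 G F : Type*} [NontriviallyNormedField 𝕜]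
    [NormedAddCommGroup G] [NormedSpace 𝕜 G] [NormedAddCommGroup F] [NormedSpace 𝕜 F]
    {n : WithTop ℕ∞} {f : G → F} {S T : Set G} (hS : IsClosed S) (hT : IsClosed T)
    (hST : Disjoint S T) (hf : ContDiff 𝕜 n f) (hfST : tsupport f ⊆ S ∪ T) :
    ContDiff 𝕜 n (S.indicator f) := by
  rw [contDiff_iff_contDiffAt]
  intro x
  by_cases hx : x ∈ S
  · have hxT : Tᶜ ∈ 𝓝 x := hT.isOpen_compl.mem_nhds (hST.notMem_of_mem_left hx)
    refine hf.contDiffAt.congr_of_eventuallyEq ?_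
    filter_upwards [hxT] with y hyT
    refine indicator_apply_eq_self.mpr fun hyS => ?_
    exact image_eq_zero_of_notMem_tsupport fun hy => (hfST hy).elim hyS hyT
  · refine contDiffAt_const (c := 0).congr_of_eventuallyEq ?_
    filter_upwards [hS.isOpen_compl.mem_nhds hx] with y hy
    exact indicator_of_notMem hy f

end Support

section CauchySchwarz

theorem sq_integral_le_measureReal_mul {α : Type*} [MeasurableSpace α] {μ : Measure α}
    [IsFiniteMeasure μ] {g : α → ℝ} (hg : MemLp g 2 μ) :
    (∫ x, g x ∂μ) ^ 2 ≤ μ.real univ * ∫ x, g x ^ 2 ∂μ := by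
  have hg₁ : Integrable g μ := hg.integrable one_le_two
  have hquad (t : ℝ) :
      0 ≤ μ.real univ * (t * t) + (-2 * ∫ x, g x ∂μ) * t + ∫ x, g x ^ 2 ∂μ := by
    calc 0 ≤ ∫ x, (t ^ 2 - 2 * t * g x + g x ^ 2) ∂μ :=
          integral_nonneg fun x => (sq_nonneg (t - g x)).trans_eq (sub_sq t (g x))
      _ = _ := by
          rw [integral_add (by fun_prop) hg.integrable_sq,
            integral_sub (by fun_prop) (by fun_prop), integral_const_mul, integral_const,
            smul_eq_mul]
          ring
  have := discrim_le_zero hquad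
  rw [discrim] at this
  linarith

theorem sq_sub_le_mul_integral_deriv_sq {f : ℝ → ℝ} (hf : ContDiff ℝ 1 f) {x y : ℝ}
    (hxy : x ≤ y) : (f y - f x) ^ 2 ≤ (y - x) * ∫ t in x..y, deriv f t ^ 2 := by
  have hf' : Continuous (deriv f) := hf.continuous_deriv le_rfl
  have hLp : MemLp (deriv f) 2 (volume.restrict (Ioc x y)) :=
    (memLp_two_iff_integrable_sq hf'.aestronglyMeasurable).mpr (hf'.pow 2).integrableOn_Ioc
  rw [← intervalIntegral.integral_deriv_eq_sub (fun t _ => hf.differentiable one_ne_zero t)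
    (hf'.intervalIntegrable _ _), intervalIntegral.integral_of_le hxy,
    intervalIntegral.integral_of_le hxy]
  simpa [hxy] using sq_integral_le_measureReal_mul hLp

theorem integral_abs_le_sqrt {X : Type*} [TopologicalSpace X] [MeasurableSpace X]
    [OpensMeasurableSpace X] {μ : Measure X} [IsFiniteMeasureOnCompacts μ] {f : X → ℝ}
    (hf : Continuous f) (hc : HasCompactSupport f) :
    ∫ x, |f x| ∂μ ≤ √(μ.real (tsupport f) * ∫ x, f x ^ 2 ∂μ) := by
  have : IsFiniteMeasure (μ.restrict (tsupport f)) :=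
    ⟨by simpa using hc.isCompact.measure_lt_top⟩
  have hLp : MemLp (fun x => |f x|) 2 (μ.restrict (tsupport f)) :=
    ((hf.memLp_of_hasCompactSupport hc).restrict _).abs
  have hcs := sq_integral_le_measureReal_mul hLp
  rw [setIntegral_eq_integral_of_forall_compl_eq_zero
      fun x hx => by simp [image_eq_zero_of_notMem_tsupport hx],
    setIntegral_eq_integral_of_forall_compl_eq_zero
      fun x hx => by simp [image_eq_zero_of_notMem_tsupport hx]] at hcs
  exact Real.le_sqrt_of_sq_le (by simpa using hcs)

end CauchySchwarz

section SoftThreshold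

variable (χ : ContDiffBump (0 : ℝ))

/-- A continuously differentiable version of soft thresholding: it vanishes on `[-rIn, rIn]`, is
nonexpansive, and differs from the identity by at most `2 * rOut`. -/
noncomputable def softThreshold (s : ℝ) : ℝ :=
  s - ∫ t in 0..s, χ t

theorem hasDerivAt_softThreshold (s : ℝ) : HasDerivAt (softThreshold χ) (1 - χ s) s :=
  (hasDerivAt_id s).sub (χ.continuous.integral_hasStrictDerivAt 0 s).hasDerivAt

theorem contDiff_softThreshold : ContDiff ℝ 1 (softThreshold χ) := by
  rw [contDiff_one_iff_deriv, funext fun s => (hasDerivAt_softThreshold χ s).deriv]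
  exact ⟨fun s => (hasDerivAt_softThreshold χ s).differentiableAt,
    continuous_const.sub χ.continuous⟩

theorem abs_deriv_softThreshold_le_one (s : ℝ) : |deriv (softThreshold χ) s| ≤ 1 := by
  rw [(hasDerivAt_softThreshold χ s).deriv, abs_le]
  constructor <;> linarith [χ.nonneg (x := s), χ.le_one (x := s)]

variable {χ} in
theorem softThreshold_eq_zero {s : ℝ} (hs : |s| ≤ χ.rIn) : softThreshold χ s = 0 := by
  have hone : ∫ t in 0..s, χ t = ∫ _ in 0..s, (1 : ℝ) :=
    intervalIntegral.integral_congr fun t ht => χ.one_of_mem_closedBall <| by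
      simpa using (abs_sub_left_of_mem_uIcc ht).trans (by simpa using hs)
  simp [softThreshold, hone]

@[simp]
theorem softThreshold_zero : softThreshold χ 0 = 0 := by
  simp [softThreshold]

theorem abs_softThreshold_le (s : ℝ) : |softThreshold χ s| ≤ |s| := by
  simpa using convex_univ.norm_image_sub_le_of_norm_deriv_le
    (fun t _ => (hasDerivAt_softThreshold χ t).differentiableAt)
    (fun t _ => abs_deriv_softThreshold_le_one χ t) (mem_univ 0) (mem_univ s)

theorem abs_sub_softThreshold_le (s : ℝ) : |s - softThreshold χ s| ≤ 2 * χ.rOut := by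
  calc |s - softThreshold χ s| = |∫ t in uIoc 0 s, χ t| := by
        rw [softThreshold, sub_sub_cancel,
            intervalIntegral.abs_integral_eq_abs_integral_uIoc]
    _ = ∫ t in uIoc 0 s, χ t := abs_of_nonneg (integral_nonneg fun _ => χ.nonneg)
    _ ≤ ∫ t, χ t := setIntegral_le_integral χ.integrable (Eventually.of_forall fun _ => χ.nonneg)
    _ ≤ volume.real (Metric.closedBall (0 : ℝ) χ.rOut) := χ.integral_le_measure_closedBall volume
    _ = 2 * χ.rOut := by simp [χ.rOut_pos.le]

theorem sq_sub_le_softThreshold_sq (s : ℝ) :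
    s ^ 2 - 4 * χ.rOut * |s| ≤ softThreshold χ s ^ 2 := by
  have hsum : |s + softThreshold χ s| ≤ 2 * |s| :=
    (abs_add_le _ _).trans (by linarith [abs_softThreshold_le χ s])
  have hdiff : s ^ 2 - softThreshold χ s ^ 2 ≤ 2 * |s| * (2 * χ.rOut) := by
    calc s ^ 2 - softThreshold χ s ^ 2 = (s + softThreshold χ s) * (s - softThreshold χ s) := by
          ring
      _ ≤ |s + softThreshold χ s| * |s - softThreshold χ s| := by
          rw [← abs_mul]; exact le_abs_self _
      _ ≤ _ := by gcongr; exact abs_sub_softThreshold_le χ s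
  linarith

end SoftThreshold

section SchrodingerForm

/-- The quadratic form of `-d²/dx² + V`, the numerator of the Rayleigh quotient. -/
noncomputable def schrodingerForm (V f : ℝ → ℝ) : ℝ :=
  ∫ x, (deriv f x ^ 2 + V x * f x ^ 2)

/-- The squared `L²` norm, the denominator of the Rayleigh quotient. -/
noncomputable def l2NormSq (f : ℝ → ℝ) : ℝ :=
  ∫ x, f x ^ 2

variable {V f : ℝ → ℝ}

theorem integrable_sq_of_hasCompactSupport (hf : Continuous f) (hc : HasCompactSupport f) :
    Integrable fun x => f x ^ 2 :=
  (hf.memLp_of_hasCompactSupport hc).integrable_sq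

theorem integrable_deriv_sq (hf : ContDiff ℝ 1 f) (hc : HasCompactSupport f) :
    Integrable fun x => deriv f x ^ 2 :=
  integrable_sq_of_hasCompactSupport (hf.continuous_deriv le_rfl) hc.deriv

theorem integrable_schrodingerForm (hloc : LocallyIntegrable V) (hf : ContDiff ℝ 1 f)
    (hc : HasCompactSupport f) : Integrable fun x => deriv f x ^ 2 + V x * f x ^ 2 :=
  (integrable_deriv_sq hf hc).add <|
    hloc.integrable_smul_right_of_hasCompactSupport (hf.continuous.pow 2)
      (hasCompactSupport_pow hc two_ne_zero)

theorem l2NormSq_nonneg (f : ℝ → ℝ) : 0 ≤ l2NormSq f :=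
  integral_nonneg fun _ => sq_nonneg _

theorem l2NormSq_pos (hf : Continuous f) (hc : HasCompactSupport f) (h0 : f ≠ 0) :
    0 < l2NormSq f := by
  obtain ⟨x, hx⟩ := Function.ne_iff.mp h0
  exact (hf.pow 2).integral_pos_of_hasCompactSupport_nonneg_nonzero
    (hasCompactSupport_pow hc two_ne_zero) (fun _ => sq_nonneg _) (pow_ne_zero 2 hx)

theorem schrodingerForm_nonneg (hpos : ∀ᵐ x, 0 ≤ V x) (f : ℝ → ℝ) :
    0 ≤ schrodingerForm V f := by
  refine integral_nonneg_of_ae ?_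
  filter_upwards [hpos] with x hx
  simp only [Pi.zero_apply]
  positivity

theorem integral_deriv_sq_le_schrodingerForm (hloc : LocallyIntegrable V)
    (hpos : ∀ᵐ x, 0 ≤ V x) (hf : ContDiff ℝ 1 f) (hc : HasCompactSupport f) :
    ∫ x, deriv f x ^ 2 ≤ schrodingerForm V f := by
  refine integral_mono_ae (integrable_deriv_sq hf hc) (integrable_schrodingerForm hloc hf hc) ?_
  filter_upwards [hpos] with x hx
  exact le_add_of_nonneg_right (mul_nonneg hx (sq_nonneg _))

theorem eq_zero_of_tsupport_subset_Iic {t : ℝ} (hf : Continuous f) (hS : tsupport f ⊆ Iic t) :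
    f t = 0 := by
  have hsub := support_subset_interior_of_tsupport_subset hf hS
  rw [interior_Iic] at hsub
  exact notMem_support.mp fun h => lt_irrefl t (hsub h)

theorem sq_le_mul_schrodingerForm (hloc : LocallyIntegrable V) (hpos : ∀ᵐ x, 0 ≤ V x)
    (hf : ContDiff ℝ 1 f) (hc : HasCompactSupport f) {t x : ℝ} (hS : tsupport f ⊆ Iic t)
    (hxt : x ≤ t) : f x ^ 2 ≤ (t - x) * schrodingerForm V f := by
  calc f x ^ 2 = (f t - f x) ^ 2 := by
        rw [eq_zero_of_tsupport_subset_Iic hf.continuous hS]; ring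
    _ ≤ (t - x) * ∫ y in x..t, deriv f y ^ 2 := sq_sub_le_mul_integral_deriv_sq hf hxt
    _ ≤ (t - x) * ∫ y, deriv f y ^ 2 := by
        have := sub_nonneg.mpr hxt
        rw [intervalIntegral.integral_of_le hxt]
        gcongr
        · exact Eventually.of_forall fun _ => sq_nonneg _
        · exact integrable_deriv_sq hf hc
        · exact Measure.restrict_le_self
    _ ≤ (t - x) * schrodingerForm V f := by
        have := sub_nonneg.mpr hxt
        gcongr
        exact integral_deriv_sq_le_schrodingerForm hloc hpos hf hc

theorem schrodingerForm_softThreshold_comp_le (hloc : LocallyIntegrable V)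
    (hpos : ∀ᵐ x, 0 ≤ V x) (χ : ContDiffBump (0 : ℝ)) (hf : ContDiff ℝ 1 f)
    (hc : HasCompactSupport f) :
    schrodingerForm V (softThreshold χ ∘ f) ≤ schrodingerForm V f := by
  refine integral_mono_ae (integrable_schrodingerForm hloc ((contDiff_softThreshold χ).comp hf)
    (hc.comp_left (softThreshold_zero χ))) (integrable_schrodingerForm hloc hf hc) ?_
  filter_upwards [hpos] with x hx
  have hderiv : deriv (softThreshold χ ∘ f) x = deriv (softThreshold χ) (f x) * deriv f x :=
    deriv_comp x (hasDerivAt_softThreshold χ _).differentiableAt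
      (hf.differentiable one_ne_zero _)
  have hkinetic : deriv (softThreshold χ ∘ f) x ^ 2 ≤ deriv f x ^ 2 := by
    rw [hderiv, sq_le_sq, abs_mul]
    exact mul_le_of_le_one_left (abs_nonneg _) (abs_deriv_softThreshold_le_one χ _)
  have hpotential : softThreshold χ (f x) ^ 2 ≤ f x ^ 2 :=
    sq_le_sq.mpr (abs_softThreshold_le χ _)
  exact add_le_add hkinetic (mul_le_mul_of_nonneg_left hpotential hx)

theorem l2NormSq_sub_le_softThreshold_comp (χ : ContDiffBump (0 : ℝ)) (hf : Continuous f)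
    (hc : HasCompactSupport f) :
    l2NormSq f - 4 * χ.rOut * √(volume.real (tsupport f) * l2NormSq f) ≤
      l2NormSq (softThreshold χ ∘ f) := by
  have hsq := integrable_sq_of_hasCompactSupport hf hc
  have habs : Integrable fun x => 4 * χ.rOut * |f x| :=
    ((hf.integrable_of_hasCompactSupport hc).abs).const_mul _
  calc l2NormSq f - 4 * χ.rOut * √(volume.real (tsupport f) * l2NormSq f)
      ≤ l2NormSq f - 4 * χ.rOut * ∫ x, |f x| := by
        have := χ.rOut_pos
        gcongr
        exact integral_abs_le_sqrt hf hc
    _ = ∫ x, (f x ^ 2 - 4 * χ.rOut * |f x|) := by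
        rw [integral_sub hsq habs, integral_const_mul, l2NormSq]
    _ ≤ l2NormSq (softThreshold χ ∘ f) :=
        integral_mono (hsq.sub habs)
          (integrable_sq_of_hasCompactSupport ((contDiff_softThreshold χ).continuous.comp hf)
            (hc.comp_left (softThreshold_zero χ)))
          fun x => sq_sub_le_softThreshold_sq χ (f x)

end SchrodingerForm

section GroundStateEnergy

variable {V : ℝ → ℝ} {S : Set ℝ}

theorem lambdaV_anti (V : ℝ → ℝ) : Antitone (lambdaV V) := by
  rintro S T hST
  refine sInf_le_sInf ?_
  rintro _ ⟨f, ⟨hf, h0, hc, hS⟩, rfl⟩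
  exact ⟨f, ⟨hf, h0, hc, hS.trans hST⟩, rfl⟩

theorem lambdaV_lt_coe_iff (hpos : ∀ᵐ x, 0 ≤ V x) {μ : ℝ≥0} :
    lambdaV V S < μ ↔ ∃ f : ℝ → ℝ, ContDiff ℝ 1 f ∧ HasCompactSupport f ∧ tsupport f ⊆ S ∧
      schrodingerForm V f < μ * l2NormSq f := by
  have hlt {f : ℝ → ℝ} (hf : ContDiff ℝ 1 f) (hc : HasCompactSupport f) (h0 : f ≠ 0) :
      ENNReal.ofReal (rayleigh V f) < μ ↔ schrodingerForm V f < μ * l2NormSq f := by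
    have hnorm := l2NormSq_pos hf.continuous hc h0
    exact (ENNReal.ofReal_lt_coe_iff
      (div_nonneg (schrodingerForm_nonneg hpos f) hnorm.le)).trans (div_lt_iff₀ hnorm)
  rw [lambdaV, sInf_lt_iff]
  constructor
  · rintro ⟨_, ⟨f, ⟨hf, h0, hc, hS⟩, rfl⟩, h⟩
    exact ⟨f, hf, hc, hS, (hlt hf hc h0).mp h⟩
  · rintro ⟨f, hf, hc, hS, h⟩
    have h0 : f ≠ 0 := by
      rintro rfl
      simp [schrodingerForm, l2NormSq] at h
    exact ⟨_, ⟨f, ⟨hf, h0, hc, hS⟩, rfl⟩, (hlt hf hc h0).mpr h⟩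

theorem exists_isCompact_lambdaV_lt {e : ℝ≥0∞} (h : lambdaV V S < e) :
    ∃ K ⊆ S, IsCompact K ∧ lambdaV V K < e := by
  obtain ⟨_, ⟨f, ⟨hf, h0, hc, hS⟩, rfl⟩, he⟩ := sInf_lt_iff.mp h
  exact ⟨tsupport f, hS, hc.isCompact,
    sInf_lt_iff.mpr ⟨_, ⟨f, ⟨hf, h0, hc, subset_rfl⟩, rfl⟩, he⟩⟩

theorem lambdaV_eq_top_of_interior_eq_empty (hS : interior S = ∅) : lambdaV V S = ∞ := by
  refine sInf_eq_top.mpr ?_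
  rintro _ ⟨f, ⟨hf, h0, -, hfS⟩, rfl⟩
  have hsub := support_subset_interior_of_tsupport_subset hf.continuous hfS
  exact absurd (support_eq_empty_iff.mp (subset_empty_iff.mp (hS ▸ hsub))) h0

theorem lt_of_lambdaV_Icc_lt {a b : ℝ} {e : ℝ≥0∞} (h : lambdaV V (Icc a b) < e) : a < b := by
  by_contra! hba
  exact not_top_lt (lambdaV_eq_top_of_interior_eq_empty (V := V) (S := Icc a b)
    (by simp [hba]) ▸ h)

end GroundStateEnergy

section DisjointUnion

variable {V : ℝ → ℝ} {S T : Set ℝ}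

theorem l2NormSq_add_of_disjoint {g h : ℝ → ℝ} (hg : Continuous g) (hgc : HasCompactSupport g)
    (hh : Continuous h) (hhc : HasCompactSupport h) (hgh : Disjoint (tsupport g) (tsupport h)) :
    l2NormSq (g + h) = l2NormSq g + l2NormSq h := by
  rw [l2NormSq, l2NormSq, l2NormSq,
    ← integral_add (integrable_sq_of_hasCompactSupport hg hgc)
      (integrable_sq_of_hasCompactSupport hh hhc)]
  refine integral_congr_ae (Eventually.of_forall fun x => ?_)
  by_cases hx : x ∈ tsupport g
  · simp [image_eq_zero_of_notMem_tsupport (hgh.notMem_of_mem_left hx)]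
  · simp [image_eq_zero_of_notMem_tsupport hx]

theorem schrodingerForm_add_of_disjoint (hloc : LocallyIntegrable V) {g h : ℝ → ℝ}
    (hg : ContDiff ℝ 1 g) (hgc : HasCompactSupport g) (hh : ContDiff ℝ 1 h)
    (hhc : HasCompactSupport h) (hgh : Disjoint (tsupport g) (tsupport h)) :
    schrodingerForm V (g + h) = schrodingerForm V g + schrodingerForm V h := by
  rw [schrodingerForm, schrodingerForm, schrodingerForm,
    ← integral_add (integrable_schrodingerForm hloc hg hgc)
      (integrable_schrodingerForm hloc hh hhc)]
  refine integral_congr_ae (Eventually.of_forall fun x => ?_)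
  have hderiv : deriv (g + h) x = deriv g x + deriv h x :=
    deriv_add (hg.differentiable one_ne_zero x) (hh.differentiable one_ne_zero x)
  by_cases hx : x ∈ tsupport g
  · have hx' := hgh.notMem_of_mem_left hx
    simp [hderiv, deriv_of_notMem_tsupport hx', image_eq_zero_of_notMem_tsupport hx']
  · simp [hderiv, deriv_of_notMem_tsupport hx, image_eq_zero_of_notMem_tsupport hx]

theorem lambdaV_union_of_disjoint (hloc : LocallyIntegrable V) (hpos : ∀ᵐ x, 0 ≤ V x)
    (hS : IsClosed S) (hT : IsClosed T) (hST : Disjoint S T) :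
    lambdaV V (S ∪ T) = min (lambdaV V S) (lambdaV V T) := by
  refine le_antisymm (le_min (lambdaV_anti V subset_union_left)
    (lambdaV_anti V subset_union_right)) (le_of_forall_gt fun e he => ?_)
  obtain ⟨μ, hμ, hμe⟩ := ENNReal.lt_iff_exists_nnreal_btwn.mp he
  refine lt_of_lt_of_le ?_ hμe.le
  obtain ⟨f, hf, hc, hfST, hlt⟩ := (lambdaV_lt_coe_iff hpos).mp hμ
  have hfS := contDiff_indicator_of_tsupport_subset_union hS hT hST hf hfST
  have hfT := contDiff_indicator_of_tsupport_subset_union hT hS hST.symm hf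
    (union_comm S T ▸ hfST)
  have hcS := hasCompactSupport_indicator hc S
  have hcT := hasCompactSupport_indicator hc T
  have hsum : S.indicator f + T.indicator f = f :=
    (indicator_union_of_disjoint hST f).symm.trans
      (indicator_eq_self.mpr ((subset_tsupport f).trans hfST))
  have hdisj : Disjoint (tsupport (S.indicator f)) (tsupport (T.indicator f)) :=
    hST.mono (tsupport_indicator_subset hS f) (tsupport_indicator_subset hT f)
  rw [← hsum, schrodingerForm_add_of_disjoint hloc hfS hcS hfT hcT hdisj,
    l2NormSq_add_of_disjoint hfS.continuous hcS hfT.continuous hcT hdisj, mul_add] at hlt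
  rw [min_lt_iff, lambdaV_lt_coe_iff hpos, lambdaV_lt_coe_iff hpos]
  exact (lt_or_lt_of_add_lt_add hlt).imp
    (fun h => ⟨_, hfS, hcS, tsupport_indicator_subset hS f, h⟩)
    (fun h => ⟨_, hfT, hcT, tsupport_indicator_subset hT f, h⟩)

end DisjointUnion

section Intervals

variable {V : ℝ → ℝ}

theorem lambdaV_lt_of_abs_le_of_notMem (hloc : LocallyIntegrable V) (hpos : ∀ᵐ x, 0 ≤ V x)
    {S : Set ℝ} (hS : IsClosed S) {f : ℝ → ℝ} (hf : ContDiff ℝ 1 f) (hc : HasCompactSupport f)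
    {k : ℝ} (hk : 0 < k) (hfk : ∀ x ∉ S, |f x| ≤ k) {ν : ℝ≥0}
    (hν : schrodingerForm V f <
      ν * (l2NormSq f - 8 * k * √(volume.real (tsupport f) * l2NormSq f))) :
    lambdaV V S < ν := by
  let χ : ContDiffBump (0 : ℝ) := ⟨k, 2 * k, hk, by linarith⟩
  have hsupp : tsupport (softThreshold χ ∘ f) ⊆ S :=
    closure_minimal (fun x hx => not_not.mp fun hxS => hx (softThreshold_eq_zero (hfk x hxS))) hS
  refine (lambdaV_lt_coe_iff hpos).mpr ⟨softThreshold χ ∘ f, (contDiff_softThreshold χ).comp hf,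
    hc.comp_left (softThreshold_zero χ), hsupp, ?_⟩
  calc schrodingerForm V (softThreshold χ ∘ f) ≤ schrodingerForm V f :=
        schrodingerForm_softThreshold_comp_le hloc hpos χ hf hc
    _ < ν * (l2NormSq f - 8 * k * √(volume.real (tsupport f) * l2NormSq f)) := hν
    _ = ν * (l2NormSq f - 4 * χ.rOut * √(volume.real (tsupport f) * l2NormSq f)) := by
        simp only [χ]; ring
    _ ≤ ν * l2NormSq (softThreshold χ ∘ f) := by
        gcongr
        exact l2NormSq_sub_le_softThreshold_comp χ hf.continuous hc

theorem lambdaV_Icc_lt_of_lt (hloc : LocallyIntegrable V) (hpos : ∀ᵐ x, 0 ≤ V x)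
    {a s t : ℝ} (hst : s < t) {μ ν : ℝ≥0} (ht : lambdaV V (Icc a t) < μ)
    (hμν : (μ : ℝ) ≤ ν * (1 - 8 * √(μ * (t - s) * (t - a)))) :
    lambdaV V (Icc a s) < ν := by
  obtain ⟨f, hf, hc, hft, hlt⟩ := (lambdaV_lt_coe_iff hpos).mp ht
  set N := l2NormSq f
  have hN : 0 ≤ N := l2NormSq_nonneg f
  have hts : 0 < t - s := sub_pos.mpr hst
  have hE : 0 ≤ schrodingerForm V f := schrodingerForm_nonneg hpos f
  have hk : 0 < √((t - s) * (μ * N)) := Real.sqrt_pos.mpr (mul_pos hts (hE.trans_lt hlt))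
  have hsmall : ∀ x ∉ Icc a s, |f x| ≤ √((t - s) * (μ * N)) := fun x hx => by
    by_cases hxt : x ∈ Icc a t
    · have hsx : s < x := not_le.mp fun h => hx ⟨hxt.1, h⟩
      refine Real.abs_le_sqrt ?_
      calc f x ^ 2 ≤ (t - x) * schrodingerForm V f :=
            sq_le_mul_schrodingerForm hloc hpos hf hc (hft.trans Icc_subset_Iic_self) hxt.2
        _ ≤ (t - s) * (μ * N) := by gcongr
    · simp [image_eq_zero_of_notMem_tsupport fun h => hxt (hft h)]
  have hvolume : volume.real (tsupport f) ≤ t - a := by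
    rw [← Real.volume_real_Icc_of_le (lt_of_lambdaV_Icc_lt ht).le]
    exact measureReal_mono hft measure_Icc_lt_top.ne
  have hloss : √((t - s) * (μ * N)) * √(volume.real (tsupport f) * N) ≤
      √(μ * (t - s) * (t - a)) * N := by
    calc √((t - s) * (μ * N)) * √(volume.real (tsupport f) * N)
        ≤ √((t - s) * (μ * N)) * √((t - a) * N) := by gcongr
      _ = √(μ * (t - s) * (t - a) * N ^ 2) := by
          rw [← Real.sqrt_mul (by positivity)]; ring_nf
      _ = √(μ * (t - s) * (t - a)) * N := by
          rw [Real.sqrt_mul' _ (sq_nonneg N), Real.sqrt_sq hN]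
  refine lambdaV_lt_of_abs_le_of_notMem hloc hpos isClosed_Icc hf hc hk hsmall ?_
  calc schrodingerForm V f < μ * N := hlt
    _ ≤ ν * (1 - 8 * √(μ * (t - s) * (t - a))) * N := by gcongr
    _ = ν * (N - 8 * (√(μ * (t - s) * (t - a)) * N)) := by ring
    _ ≤ ν * (N - 8 * √((t - s) * (μ * N)) * √(volume.real (tsupport f) * N)) := by
        rw [mul_assoc 8]; gcongr

theorem continuous_lambdaV_Icc (hloc : LocallyIntegrable V) (hpos : ∀ᵐ x, 0 ≤ V x) (a : ℝ) :
    Continuous fun t => lambdaV V (Icc a t) := by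
  have hanti : Antitone fun t => lambdaV V (Icc a t) := fun s t hst =>
    lambdaV_anti V (Icc_subset_Icc_right hst)
  refine continuous_iff_continuousAt.mpr fun τ => tendsto_order.mpr ⟨fun l hl => ?_, fun u hu => ?_⟩
  · obtain ⟨ν, hlν, hντ⟩ := ENNReal.lt_iff_exists_nnreal_btwn.mp hl
    obtain ⟨μ, hlμ, hμν⟩ := ENNReal.lt_iff_exists_nnreal_btwn.mp hlν
    have hclose : ∀ᶠ t in 𝓝 τ, (μ : ℝ) < ν * (1 - 8 * √(μ * (t - τ) * (t - a))) :=
      continuousAt_const.eventually_lt (by fun_prop) (by simpa using hμν)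
    filter_upwards [hclose] with t ht
    rcases le_or_gt t τ with htτ | hτt
    · exact hl.trans_le (hanti htτ)
    · by_contra! hle
      exact hντ.not_gt (lambdaV_Icc_lt_of_lt hloc hpos hτt (hle.trans_lt hlμ) ht.le)
  · obtain ⟨μ, hτμ, hμu⟩ := ENNReal.lt_iff_exists_nnreal_btwn.mp hu
    obtain ⟨ν, hμν, hνu⟩ := ENNReal.lt_iff_exists_nnreal_btwn.mp hμu
    have hclose : ∀ᶠ t in 𝓝 τ, (μ : ℝ) < ν * (1 - 8 * √(μ * (τ - t) * (τ - a))) :=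
      continuousAt_const.eventually_lt (by fun_prop) (by simpa using hμν)
    filter_upwards [hclose] with t ht
    rcases lt_or_ge t τ with htτ | hτt
    · exact (lambdaV_Icc_lt_of_lt hloc hpos htτ hτμ ht.le).trans hνu
    · exact (hanti hτt).trans_lt hu

theorem exists_lambdaV_Icc_eq (hloc : LocallyIntegrable V) (hpos : ∀ᵐ x, 0 ≤ V x) {a b : ℝ}
    {e : ℝ≥0∞} (he : e ≠ ∞) (hb : lambdaV V (Icc a b) < e) :
    ∃ t ∈ Ioc a b, lambdaV V (Icc a t) = e := by
  have htop : lambdaV V (Icc a a) = ∞ := lambdaV_eq_top_of_interior_eq_empty (by simp)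
  obtain ⟨t, ht, hte⟩ := intermediate_value_Icc' (lt_of_lambdaV_Icc_lt hb).le
    (continuous_lambdaV_Icc hloc hpos a).continuousOn ⟨hb.le, htop.symm ▸ le_top⟩
  exact ⟨t, ⟨lt_of_lambdaV_Icc_lt (hte.trans_lt he.lt_top), ht.2⟩, hte⟩

end Intervals

theorem lambdaV_lt_of_SigmaV_lt {V : ℝ → ℝ} {e : ℝ≥0∞} (he : SigmaV V < e) {R : ℝ} (hR : 0 < R) :
    lambdaV V {x | R ≤ |x|} < e :=
  (le_iSup₂ (f := fun (R : ℝ) (_ : 0 < R) => lambdaV V {x : ℝ | R ≤ |x|}) R hR).trans_lt he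

theorem exists_Icc_subset_lambdaV_eq {V : ℝ → ℝ} (hloc : LocallyIntegrable V)
    (hpos : ∀ᵐ x, 0 ≤ V x) {R : ℝ} (hR : 0 < R) {e : ℝ≥0∞} (he : e ≠ ∞)
    (hlt : lambdaV V {x | R ≤ |x|} < e) :
    ∃ a b, a < b ∧ Icc a b ⊆ {x | R ≤ |x|} ∧ lambdaV V (Icc a b) = e := by
  obtain ⟨K, hKR, hK, hKe⟩ := exists_isCompact_lambdaV_lt hlt
  obtain ⟨M, hKM⟩ := hK.isBounded.subset_closedBall 0
  have hKunion : K ⊆ Icc (-M) (-R) ∪ Icc R M := fun x hx => by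
    have hxM := abs_le.mp (mem_closedBall_zero_iff.mp (hKM hx))
    exact (le_abs'.mp (hKR hx)).imp (fun h => ⟨hxM.1, h⟩) (fun h => ⟨h, hxM.2⟩)
  have hdisj : Disjoint (Icc (-M) (-R)) (Icc R M) :=
    disjoint_left.mpr fun x hx hx' => by linarith [hx.2, hx'.1]
  have hmin := (lambdaV_anti V hKunion).trans_lt hKe
  rw [lambdaV_union_of_disjoint hloc hpos isClosed_Icc isClosed_Icc hdisj, min_lt_iff] at hmin
  rcases hmin with h | h
  · obtain ⟨t, ht, hte⟩ := exists_lambdaV_Icc_eq hloc hpos he h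
    exact ⟨-M, t, ht.1, fun x hx => le_abs'.mpr (.inl (hx.2.trans ht.2)), hte⟩
  · obtain ⟨t, ht, hte⟩ := exists_lambdaV_Icc_eq hloc hpos he h
    exact ⟨R, t, ht.1, fun x hx => le_abs'.mpr (.inr hx.1), hte⟩

/-- **Theorem 1.6 for `G = ℝ`.** For every real `λ > Σ_V` there exists an infinite
equipartition of `ℝ` of energy `λ` into nondegenerate compact intervals, with pairwise
intersections contained in the respective frontiers. -/
theorem exists_infinite_equipartition (V : ℝ → ℝ) (hmeas : Measurable V)
    (hloc : LocallyIntegrable V) (hpos : ∀ᵐ x ∂(volume : Measure ℝ), 0 ≤ V x)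
    (lam : ℝ) (hlam : SigmaV V < ENNReal.ofReal lam) :
    ∃ a b : ℕ → ℝ, (∀ i, a i < b i) ∧
      (∀ i j, i ≠ j →
        Set.Icc (a i) (b i) ∩ Set.Icc (a j) (b j) ⊆
          frontier (Set.Icc (a i) (b i)) ∩ frontier (Set.Icc (a j) (b j))) ∧
      ∀ i, lambdaV V (Set.Icc (a i) (b i)) = ENNReal.ofReal lam := by
  obtain ⟨I, hI, hdisj⟩ := exists_seq_of_forall_finset_exists'
    (fun I : ℝ × ℝ => I.1 < I.2 ∧ lambdaV V (Icc I.1 I.2) = ENNReal.ofReal lam)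
    (fun I J => Disjoint (Icc I.1 I.2) (Icc J.1 J.2)) fun s _ => by
      have hbdd : Bornology.IsBounded (⋃ I ∈ s, Icc I.1 I.2) :=
        (Bornology.isBounded_biUnion_finset s).mpr fun I _ => Metric.isBounded_Icc I.1 I.2
      obtain ⟨R, hR, hsR⟩ := hbdd.subset_ball_lt 0 0
      obtain ⟨a, b, hab, habR, hlambda⟩ := exists_Icc_subset_lambdaV_eq hloc hpos hR
        ENNReal.ofReal_ne_top (lambdaV_lt_of_SigmaV_lt hlam hR)
      refine ⟨(a, b), ⟨hab, hlambda⟩, fun I hI => disjoint_left.mpr fun x hx hxab => ?_⟩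
      exact (habR hxab).not_gt (mem_ball_zero_iff.mp (hsR (mem_biUnion hI hx)))
  refine ⟨fun i => (I i).1, fun i => (I i).2, fun i => (hI i).1, fun i j hij => ?_,
    fun i => (hI i).2⟩
  rw [(hdisj hij).inter_eq]
  exact empty_subset _
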